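/- arXiv:1302.1184 — 4 statements merged into one kernel-verified Lean document; each statement's English description precedes it below -/
import Mathlib

section
/- For every extendable de Bruijn density g ∈ D^W_dBe and every i ∈ W, the function α_{W,i}(g) is a density on E^{V+W}: α_{W,i}(g)(ψ) ≥ 0 for all ψ ∈ E^{V+W} and Σ_{ψ ∈ E^{V+W}} α_{W,i}(g)(ψ) = 1. -/
open Finset
open scoped Classical

/-- Patterns over the integer interval `{A,...,B}` with values in `E`. -/
abbrev Pat (E : Type) (A B : ℤ) : Type := {x // x ∈ Finset.Icc A B} → E

/-- Evaluation of a pattern at an integer site (arbitrary value outside the domain). -/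
noncomputable def ev {E : Type} [Nonempty E] {A B : ℤ} (φ : Pat E A B) (j : ℤ) : E :=
  if h : j ∈ Finset.Icc A B then φ ⟨j, h⟩ else Classical.arbitrary E

/-- The window `σ_i(φ)|_V` of a pattern `φ`, a pattern on `V = {-p,...,q}`. -/
noncomputable def win {E : Type} [Nonempty E] (p q : ℕ) {A B : ℤ} (i : ℤ) (φ : Pat E A B) :
    Pat E (-(p : ℤ)) (q : ℤ) :=
  fun v => ev φ (i + v.1)

/-- A density on a finite type: nonnegative weights summing to one. -/
def IsDensity {α : Type} [Fintype α] (g : α → ℝ) : Prop :=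
  (∀ x, 0 ≤ g x) ∧ ∑ x, g x = 1

/-- The distribution associated with a weight function, evaluated on an event. -/
noncomputable def Pr {α : Type} [Fintype α] (g : α → ℝ) (P : α → Prop) : ℝ :=
  ∑ x, if P x then g x else 0

/-- Conditional probability `μ[P | Q] = μ[P ∩ Q]/μ[Q]` (`0` if `0/0`). -/
noncomputable def condPr {α : Type} [Fintype α] (g : α → ℝ) (P Q : α → Prop) : ℝ :=
  Pr g (fun x => P x ∧ Q x) / Pr g Q

/-- The marginalization operator `β_W`. -/
noncomputable def beta {E : Type} [Fintype E] [DecidableEq E] [Nonempty E]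
    (p q : ℕ) (t u : ℤ) (g : Pat E (-(p : ℤ) - t) ((q : ℤ) + u) → ℝ) (i : ℤ)
    (ψ : Pat E (-(p : ℤ)) (q : ℤ)) : ℝ :=
  Pr g (fun χ => win p q i χ = ψ)

/-- The reconstruction operator `α_{W,i}`. -/
noncomputable def alpha {E : Type} [Fintype E] [DecidableEq E] [Nonempty E]
    (p q : ℕ) (t u : ℤ) (g : ℤ → Pat E (-(p : ℤ)) (q : ℤ) → ℝ) (i : ℤ)
    (ψ : Pat E (-(p : ℤ) - t) ((q : ℤ) + u)) : ℝ :=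
  (∏ k ∈ Finset.Icc (-t) (i - 1),
      condPr (g k) (fun χ => ev χ (-(p : ℤ)) = ev ψ (k + -(p : ℤ)))
        (fun χ => ∀ v ∈ Finset.Icc (-(p : ℤ) + 1) (q : ℤ), ev χ v = ev ψ (k + v))) *
    g i (win p q i ψ) *
    (∏ l ∈ Finset.Icc (i + 1) u,
      condPr (g l) (fun χ => ev χ (q : ℤ) = ev ψ (l + (q : ℤ)))
        (fun χ => ∀ v ∈ Finset.Icc (-(p : ℤ)) ((q : ℤ) - 1), ev χ v = ev ψ (l + v)))

/-- Extendable de Bruijn densities. -/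
def Extendable {E : Type} [Fintype E] [DecidableEq E] [Nonempty E]
    (p q : ℕ) (t u : ℤ) (g : ℤ → Pat E (-(p : ℤ)) (q : ℤ) → ℝ) : Prop :=
  ∀ i ∈ Finset.Icc (-t) u, ∀ φ, 0 < g i φ →
    ∃ ψ : Pat E (-(p : ℤ) - t) ((q : ℤ) + u),
      win p q i ψ = φ ∧ ∀ j ∈ Finset.Icc (-t) u, 0 < g j (win p q j ψ)

/-- The event `{χ : χ|_S = ψ|_S}`. -/
def agreeOn {E : Type} [Nonempty E] {A B : ℤ} (S : Finset ℤ) (ψ χ : Pat E A B) : Prop :=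
  ∀ j ∈ S, ev χ j = ev ψ j


noncomputable def evJ {E : Type} [Nonempty E] (J : Finset ℤ) (φ : {x // x ∈ J} → E) (j : ℤ) : E :=
  if h : j ∈ J then φ ⟨j, h⟩ else Classical.arbitrary E

lemma sum_insert_pat {E : Type} [Fintype E] [Nonempty E] (J J' : Finset ℤ) (a : ℤ) (ha : a ∉ J)
    (hJ : J' = insert a J) (G : (ℤ → E) → ℝ) :
    ∑ ψ : ({x // x ∈ J'} → E), G (evJ J' ψ) =
      ∑ φ : ({x // x ∈ J} → E), ∑ e : E, G (Function.update (evJ J φ) a e) := by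
  subst hJ
  rw [← Fintype.sum_prod_type']
  symm
  have key : ∀ (φ : {x // x ∈ J} → E) (e : E),
      evJ (insert a J) (fun x => Function.update (evJ J φ) a e x.1) =
        Function.update (evJ J φ) a e := by
    intro φ e
    funext j
    by_cases hj : j = a
    · subst hj; simp [evJ]
    · by_cases hJ : j ∈ J <;> simp [evJ, hj, hJ]
  refine Finset.sum_bij' (fun x _ => fun y => Function.update (evJ J x.1) a x.2 y.1)
    (fun ψ _ => (fun x => evJ (insert a J) ψ x.1, evJ (insert a J) ψ a)) ?_ ?_ ?_ ?_ ?_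
  · simp
  · simp
  · rintro ⟨φ, e⟩ _
    simp only [key]
    ext x
    · have : x.1 ≠ a := fun h => ha (h ▸ x.2)
      simp [this, evJ]
    · simp
  · intro ψ _
    funext ⟨y, hy⟩
    by_cases hya : y = a
    · subst hya; simp [evJ]
    · have : y ∈ J := by simpa [hya] using hy
      simp [evJ, hya, this]
  · rintro ⟨φ, e⟩ _
    simp only [key]

section
variable {E : Type} [Fintype E] [DecidableEq E] [Nonempty E] (p q : ℕ)

noncomputable def fwin (i : ℤ) (f : ℤ → E) : Pat E (-(p : ℤ)) (q : ℤ) := fun v => f (i + v.1)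

lemma ev_fwin (i : ℤ) (f : ℤ → E) (v : ℤ) (hv : v ∈ Finset.Icc (-(p : ℤ)) (q : ℤ)) :
    ev (fwin p q i f) v = f (i + v) := by
  simp only [ev, dif_pos hv, fwin]

lemma eq_fwin (i : ℤ) (f : ℤ → E) (χ : Pat E (-(p : ℤ)) (q : ℤ))
    (h : ∀ v ∈ Finset.Icc (-(p : ℤ)) (q : ℤ), ev χ v = f (i + v)) : χ = fwin p q i f := by
  funext ⟨v, hv⟩
  have := h v hv
  simpa only [ev, dif_pos hv, fwin] using this

variable (g : ℤ → Pat E (-(p : ℤ)) (q : ℤ) → ℝ)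

noncomputable def Lf (k : ℤ) (f : ℤ → E) : ℝ :=
  condPr (g k) (fun χ => ev χ (-(p : ℤ)) = f (k + -(p : ℤ)))
        (fun χ => ∀ v ∈ Finset.Icc (-(p : ℤ) + 1) (q : ℤ), ev χ v = f (k + v))

noncomputable def Rf (l : ℤ) (f : ℤ → E) : ℝ :=
  condPr (g l) (fun χ => ev χ (q : ℤ) = f (l + (q : ℤ)))
        (fun χ => ∀ v ∈ Finset.Icc (-(p : ℤ)) ((q : ℤ) - 1), ev χ v = f (l + v))

noncomputable def Ff (i a b : ℤ) (f : ℤ → E) : ℝ :=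
  (∏ k ∈ Finset.Icc a (i - 1), Lf p q g k f) * g i (fwin p q i f) *
    (∏ l ∈ Finset.Icc (i + 1) b, Rf p q g l f)

lemma fwin_congr (k : ℤ) (f f' : ℤ → E)
    (h : ∀ v ∈ Finset.Icc (-(p : ℤ)) (q : ℤ), f (k + v) = f' (k + v)) :
    fwin p q k f = fwin p q k f' := by
  funext ⟨v, hv⟩; exact h v hv

lemma allcongr (k A B : ℤ) (f f' : ℤ → E)
    (h : ∀ v ∈ Finset.Icc A B, f (k + v) = f' (k + v)) :
    (fun χ : Pat E (-(p : ℤ)) (q : ℤ) => ∀ v ∈ Finset.Icc A B, ev χ v = f (k + v)) =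
    (fun χ => ∀ v ∈ Finset.Icc A B, ev χ v = f' (k + v)) := by
  funext χ
  apply propext
  exact forall₂_congr fun v hv => by rw [h v hv]

lemma Lf_congr (k : ℤ) (f f' : ℤ → E)
    (h : ∀ v ∈ Finset.Icc (-(p : ℤ)) (q : ℤ), f (k + v) = f' (k + v)) :
    Lf p q g k f = Lf p q g k f' := by
  unfold Lf
  rw [h (-(p:ℤ)) (by simp), allcongr p q k _ _ f f' (fun v hv => h v (by
    simp only [Finset.mem_Icc] at *; omega))]

lemma Rf_congr (k : ℤ) (f f' : ℤ → E)
    (h : ∀ v ∈ Finset.Icc (-(p : ℤ)) (q : ℤ), f (k + v) = f' (k + v)) :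
    Rf p q g k f = Rf p q g k f' := by
  unfold Rf
  rw [h (q:ℤ) (by simp), allcongr p q k _ _ f f' (fun v hv => h v (by
    simp only [Finset.mem_Icc] at *; omega))]

lemma Ff_congr (i a b : ℤ) (hai : a ≤ i) (hib : i ≤ b) (f f' : ℤ → E)
    (h : ∀ x, -(p:ℤ) + a ≤ x → x ≤ q + b → f x = f' x) :
    Ff p q g i a b f = Ff p q g i a b f' := by
  unfold Ff
  congr 1
  · congr 1
    · refine Finset.prod_congr rfl fun k hk => Lf_congr p q g k f f' fun v hv => ?_
      simp only [Finset.mem_Icc] at *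
      apply h <;> omega
    · rw [fwin_congr p q i f f']
      intro v hv
      simp only [Finset.mem_Icc] at *
      apply h <;> omega
  · refine Finset.prod_congr rfl fun k hk => Rf_congr p q g k f f' fun v hv => ?_
    simp only [Finset.mem_Icc] at *
    apply h <;> omega

lemma Pr_nonneg {α : Type} [Fintype α] (g : α → ℝ) (hg : ∀ x, 0 ≤ g x) (P : α → Prop) :
    0 ≤ Pr g P := Finset.sum_nonneg fun x _ => by split_ifs <;> simp [hg]

lemma condPr_nonneg {α : Type} [Fintype α] (g : α → ℝ) (hg : ∀ x, 0 ≤ g x) (P Q : α → Prop) :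
    0 ≤ condPr g P Q := div_nonneg (Pr_nonneg g hg _) (Pr_nonneg g hg _)

lemma Pr_pos {α : Type} [Fintype α] (g : α → ℝ) (hg : ∀ x, 0 ≤ g x) (P : α → Prop) (x : α)
    (hx : P x) (h : 0 < g x) : 0 < Pr g P := by
  refine Finset.sum_pos' (fun x _ => by split_ifs <;> simp [hg]) ⟨x, Finset.mem_univ _, ?_⟩
  simpa [hx] using h

lemma exists_of_condPr {α : Type} [Fintype α] (g : α → ℝ) (hg : ∀ x, 0 ≤ g x) (P Q : α → Prop)
    (h : condPr g P Q ≠ 0) : ∃ x, P x ∧ Q x ∧ 0 < g x := by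
  have h1 : Pr g (fun x => P x ∧ Q x) ≠ 0 := fun h' => h (by simp [condPr, h'])
  obtain ⟨x, _, hx⟩ := Finset.exists_ne_zero_of_sum_ne_zero h1
  by_cases hPQ : P x ∧ Q x
  · rw [if_pos hPQ] at hx
    exact ⟨x, hPQ.1, hPQ.2, lt_of_le_of_ne (hg x) (Ne.symm hx)⟩
  · rw [if_neg hPQ] at hx
    exact absurd rfl hx

lemma sum_condPr {α : Type} [Fintype α] (g : α → ℝ) (X : α → E) (Q : α → Prop)
    (h : 0 < Pr g Q) : ∑ e : E, condPr g (fun x => X x = e) Q = 1 := by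
  unfold condPr
  rw [← Finset.sum_div, div_eq_one_iff_eq h.ne']
  unfold Pr
  rw [Finset.sum_comm]
  refine Finset.sum_congr rfl fun x _ => ?_
  by_cases hQ : Q x <;> simp [hQ]

variable {p q g}

lemma supp_R (l : ℤ) (hg : ∀ x, 0 ≤ g l x) (f : ℤ → E) (h : Rf p q g l f ≠ 0) :
    0 < g l (fwin p q l f) := by
  obtain ⟨χ, h1, h2, h3⟩ := exists_of_condPr _ hg _ _ h
  rwa [← eq_fwin p q l f χ]
  intro v hv
  by_cases hvq : v = q
  · subst hvq; exact h1
  · apply h2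
    simp only [Finset.mem_Icc] at *; omega

lemma supp_L (l : ℤ) (hg : ∀ x, 0 ≤ g l x) (f : ℤ → E) (h : Lf p q g l f ≠ 0) :
    0 < g l (fwin p q l f) := by
  obtain ⟨χ, h1, h2, h3⟩ := exists_of_condPr _ hg _ _ h
  rwa [← eq_fwin p q l f χ]
  intro v hv
  by_cases hvq : v = -(p:ℤ)
  · subst hvq; exact h1
  · apply h2
    simp only [Finset.mem_Icc] at *; omega

lemma win_eq_fwin {A B : ℤ} (i : ℤ) (ψ : Pat E A B) : win p q i ψ = fwin p q i (ev ψ) := rfl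

lemma ext_step {t u : ℤ} (hext : Extendable p q t u g) (b c : ℤ)
    (hb : b ∈ Finset.Icc (-t) u) (hc : c ∈ Finset.Icc (-t) u) (f : ℤ → E)
    (h : 0 < g b (fwin p q b f)) :
    ∃ f' : ℤ → E, (∀ x, b - p ≤ x → x ≤ b + q → f' x = f x) ∧ 0 < g c (fwin p q c f') := by
  obtain ⟨ψ, h1, h2⟩ := hext b hb _ h
  refine ⟨ev ψ, fun x hx hx' => ?_, h2 c hc⟩
  have hm : x - b ∈ Finset.Icc (-(p:ℤ)) (q:ℤ) := by
    simp only [Finset.mem_Icc]; omega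
  have := congrFun h1 ⟨x - b, hm⟩
  simpa [win, fwin] using this

lemma stepR {t u : ℤ} (hgd : ∀ j ∈ Finset.Icc (-t) u, IsDensity (g j))
    (hext : Extendable p q t u g) (i a b : ℤ) (hta : -t ≤ a) (hai : a ≤ i) (hib : i ≤ b)
    (hbu : b + 1 ≤ u) (f : ℤ → E) :
    ∑ e : E, Ff p q g i a (b + 1) (Function.update f (q + (b + 1)) e) = Ff p q g i a b f := by
  have hmb : b ∈ Finset.Icc (-t) u := by simp only [Finset.mem_Icc]; omega
  have hmb1 : b + 1 ∈ Finset.Icc (-t) u := by simp only [Finset.mem_Icc]; omega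
  have e1 : ∀ e : E, Ff p q g i a (b + 1) (Function.update f (q + (b + 1)) e) =
      Ff p q g i a b f * condPr (g (b + 1)) (fun χ => ev χ (q : ℤ) = e)
        (fun χ => ∀ v ∈ Finset.Icc (-(p : ℤ)) ((q : ℤ) - 1), ev χ v = f (b + 1 + v)) := by
    intro e
    rw [← Ff_congr p q g i a b hai hib (Function.update f (q + (b + 1)) e) f]
    · unfold Ff
      have : Finset.Icc (i + 1) (b + 1) = insert (b + 1) (Finset.Icc (i + 1) b) := by
        ext x; simp only [Finset.mem_Icc, Finset.mem_insert]; omega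
      rw [this, Finset.prod_insert (by simp)]
      have : Rf p q g (b + 1) (Function.update f (q + (b + 1)) e) =
        condPr (g (b + 1)) (fun χ => ev χ (q : ℤ) = e)
        (fun χ => ∀ v ∈ Finset.Icc (-(p : ℤ)) ((q : ℤ) - 1), ev χ v = f (b + 1 + v)) := by
        unfold Rf
        rw [allcongr p q (b + 1) _ _ _ f, add_comm (b + 1) (q : ℤ), Function.update_self]
        intro v hv
        simp only [Finset.mem_Icc] at hv
        rw [Function.update_of_ne (by omega)]
      rw [this]; ring
    · intro x _ hx
      rw [Function.update_of_ne (by omega)]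
  simp_rw [e1]
  rw [← Finset.mul_sum]
  by_cases h0 : Ff p q g i a b f = 0
  · simp [h0]
  rw [sum_condPr, mul_one]
  have hpos : 0 < g b (fwin p q b f) := by
    unfold Ff at h0
    rcases eq_or_lt_of_le hib with rfl | hlt
    · exact lt_of_le_of_ne ((hgd i hmb).1 _) (Ne.symm (right_ne_zero_of_mul (left_ne_zero_of_mul h0)))
    · exact supp_R b (hgd b hmb).1 f (Finset.prod_ne_zero_iff.1 (right_ne_zero_of_mul h0) b (by
        simp only [Finset.mem_Icc]; omega))
  obtain ⟨f', h1, h2⟩ := ext_step hext b (b + 1) hmb hmb1 f hpos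
  refine Pr_pos _ (hgd _ hmb1).1 _ _ ?_ h2
  intro v hv
  simp only [Finset.mem_Icc] at hv
  rw [ev_fwin _ _ _ _ _ (by simp only [Finset.mem_Icc]; omega), h1 _ (by omega) (by omega)]

lemma stepL {t u : ℤ} (hgd : ∀ j ∈ Finset.Icc (-t) u, IsDensity (g j))
    (hext : Extendable p q t u g) (i a b : ℤ) (hta : -t ≤ a - 1) (hai : a ≤ i) (hib : i ≤ b)
    (hbu : b ≤ u) (f : ℤ → E) :
    ∑ e : E, Ff p q g i (a - 1) b (Function.update f (-(p:ℤ) + (a - 1)) e) = Ff p q g i a b f := by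
  have hma : a ∈ Finset.Icc (-t) u := by simp only [Finset.mem_Icc]; omega
  have hma1 : a - 1 ∈ Finset.Icc (-t) u := by simp only [Finset.mem_Icc]; omega
  have e1 : ∀ e : E, Ff p q g i (a - 1) b (Function.update f (-(p:ℤ) + (a - 1)) e) =
      Ff p q g i a b f * condPr (g (a - 1)) (fun χ => ev χ (-(p : ℤ)) = e)
        (fun χ => ∀ v ∈ Finset.Icc (-(p : ℤ) + 1) (q : ℤ), ev χ v = f (a - 1 + v)) := by
    intro e
    rw [← Ff_congr p q g i a b hai hib (Function.update f (-(p:ℤ) + (a - 1)) e) f]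
    · unfold Ff
      have : Finset.Icc (a - 1) (i - 1) = insert (a - 1) (Finset.Icc a (i - 1)) := by
        ext x; simp only [Finset.mem_Icc, Finset.mem_insert]; omega
      rw [this, Finset.prod_insert (by simp)]
      have : Lf p q g (a - 1) (Function.update f (-(p:ℤ) + (a - 1)) e) =
        condPr (g (a - 1)) (fun χ => ev χ (-(p : ℤ)) = e)
        (fun χ => ∀ v ∈ Finset.Icc (-(p : ℤ) + 1) (q : ℤ), ev χ v = f (a - 1 + v)) := by
        unfold Lf
        rw [allcongr p q (a - 1) _ _ _ f, add_comm (a - 1) (-(p : ℤ)), Function.update_self]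
        intro v hv
        simp only [Finset.mem_Icc] at hv
        rw [Function.update_of_ne (by omega)]
      rw [this]; ring
    · intro x hx _
      rw [Function.update_of_ne (by omega)]
  simp_rw [e1]
  rw [← Finset.mul_sum]
  by_cases h0 : Ff p q g i a b f = 0
  · simp [h0]
  rw [sum_condPr, mul_one]
  have hpos : 0 < g a (fwin p q a f) := by
    unfold Ff at h0
    rcases eq_or_lt_of_le hai with rfl | hlt
    · exact lt_of_le_of_ne ((hgd a hma).1 _) (Ne.symm (right_ne_zero_of_mul (left_ne_zero_of_mul h0)))
    · exact supp_L a (hgd a hma).1 f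
        (Finset.prod_ne_zero_iff.1 (left_ne_zero_of_mul (left_ne_zero_of_mul h0)) a (by
        simp only [Finset.mem_Icc]; omega))
  obtain ⟨f', h1, h2⟩ := ext_step hext a (a - 1) hma hma1 f hpos
  refine Pr_pos _ (hgd _ hma1).1 _ _ ?_ h2
  intro v hv
  simp only [Finset.mem_Icc] at hv
  rw [ev_fwin _ _ _ _ _ (by simp only [Finset.mem_Icc]; omega), h1 _ (by omega) (by omega)]

lemma base_sum (i : ℤ) (h : IsDensity (g i)) :
    ∑ ψ : Pat E (-(p:ℤ) + i) (q + i), Ff p q g i i i (ev ψ) = 1 := by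
  rw [← h.2]
  refine Finset.sum_bij' (fun ψ _ => fwin p q i (ev ψ)) (fun χ _ => fun x => ev χ (x.1 - i))
    ?_ ?_ ?_ ?_ ?_
  · simp
  · simp
  · intro ψ _
    funext ⟨x, hx⟩
    have hx2 := hx
    simp only [Finset.mem_Icc] at hx2
    rw [ev_fwin _ _ _ _ _ (by simp only [Finset.mem_Icc]; omega)]
    simp only [add_sub_cancel, ev, dif_pos hx]
  · intro χ _
    symm
    apply eq_fwin
    intro v hv
    have hv2 := hv
    simp only [Finset.mem_Icc] at hv2
    have : i + v ∈ Finset.Icc (-(p:ℤ) + i) (q + i) := by simp only [Finset.mem_Icc]; omega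
    simp [ev, this]
  · intro ψ _
    simp [Ff]

lemma total {t u : ℤ} (hgd : ∀ j ∈ Finset.Icc (-t) u, IsDensity (g j))
    (hext : Extendable p q t u g) (i : ℤ) (hi : i ∈ Finset.Icc (-t) u) :
    ∑ ψ : Pat E (-(p:ℤ) + -t) (q + u), Ff p q g i (-t) u (ev ψ) = 1 := by
  have hi' := hi
  simp only [Finset.mem_Icc] at hi'
  have hR : ∀ b, i ≤ b → b ≤ u →
      ∑ ψ : Pat E (-(p:ℤ) + i) (q + b), Ff p q g i i b (ev ψ) = 1 := by
    intro b hb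
    induction b, hb using Int.leInduction with
    | base => intro _; exact base_sum i (hgd i hi)
    | succ b hb ih =>
      intro hbu
      rw [← ih (by omega)]
      refine (sum_insert_pat (Finset.Icc (-(p:ℤ) + i) (q + b)) (Finset.Icc (-(p:ℤ) + i) (q + (b + 1)))
        (q + (b + 1)) (by simp) (by
          ext x; simp only [Finset.mem_Icc, Finset.mem_insert]; omega) (Ff p q g i i (b+1))).trans ?_
      refine Finset.sum_congr rfl fun ψ _ => ?_
      exact stepR hgd hext i i b hi'.1 le_rfl hb hbu _
  have hL : ∀ a, a ≤ i → -t ≤ a →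
      ∑ ψ : Pat E (-(p:ℤ) + a) (q + u), Ff p q g i a u (ev ψ) = 1 := by
    intro a ha
    induction a, ha using Int.leInductionDown with
    | base => intro _; exact hR u hi'.2 le_rfl
    | pred a ha ih =>
      intro hta
      rw [← ih (by omega)]
      refine (sum_insert_pat (Finset.Icc (-(p:ℤ) + a) (q + u)) (Finset.Icc (-(p:ℤ) + (a - 1)) (q + u))
        (-(p:ℤ) + (a - 1)) (by simp) (by
          ext x; simp only [Finset.mem_Icc, Finset.mem_insert]; omega) (Ff p q g i (a-1) u)).trans ?_
      refine Finset.sum_congr rfl fun ψ _ => ?_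
      exact stepL hgd hext i a u hta ha hi'.2 le_rfl _
  exact hL (-t) hi'.1 le_rfl

end

/-- `α_{W,i}` of an extendable de Bruijn density is a density. -/
theorem stmt_3
    (E : Type) [Fintype E] [DecidableEq E] [Nonempty E]
    (p q : ℕ) (t u : ℤ) (htu : -t ≤ u)
    (g : ℤ → Pat E (-(p : ℤ)) (q : ℤ) → ℝ)
    (hgd : ∀ j ∈ Finset.Icc (-t) u, IsDensity (g j))
    (hext : Extendable p q t u g)
    (i : ℤ) (hi : i ∈ Finset.Icc (-t) u) :
    IsDensity (alpha p q t u g i) := by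
  have hi' := hi
  simp only [Finset.mem_Icc] at hi'
  refine ⟨fun ψ => ?_, ?_⟩
  · unfold alpha
    refine mul_nonneg (mul_nonneg (Finset.prod_nonneg fun k hk => ?_) ((hgd i hi).1 _))
      (Finset.prod_nonneg fun k hk => ?_)
    all_goals
      simp only [Finset.mem_Icc] at hk
      exact condPr_nonneg _ (hgd k (by simp only [Finset.mem_Icc]; omega)).1 _ _
  · have key : ∀ A : ℤ, A = -(p:ℤ) + -t →
        ∑ ψ : Pat E A (q + u), Ff p q g i (-t) u (ev ψ) = 1 := by
      rintro A rfl
      exact total hgd hext i hi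
    exact key _ (sub_eq_add_neg _ _)
end

section
/- Site independence of reconstruction on the image of β_W: if g ∈ (D(E^V))^W lies in the image of β_W, i.e. g = β_W(g̃) for some density g̃ on E^{V+W}, then α_{W,i}(g) = α_{W,j}(g) for all i, j ∈ W. -/
open Finset
open scoped Classical

lemma Pr_congr' {α : Type} [Fintype α] (g : α → ℝ) (P Q : α → Prop) (h : ∀ x, P x ↔ Q x) :
    Pr g P = Pr g Q := by
  have : P = Q := funext fun x => propext (h x)
  rw [this]

lemma Pr_eq_single {α : Type} [Fintype α] (g : α → ℝ) (P : α → Prop) (a : α)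
    (h : ∀ x, P x ↔ x = a) : Pr g P = g a := by
  rw [Pr_congr' g P (fun x => x = a) h]
  simp [Pr]

lemma ev_win {E : Type} [Nonempty E] (p q : ℕ) {A B : ℤ} (i : ℤ) (φ : Pat E A B) (v : ℤ)
    (hv : v ∈ Finset.Icc (-(p : ℤ)) (q : ℤ)) : ev (win p q i φ) v = ev φ (i + v) := by
  rw [ev, dif_pos hv]
  rfl

lemma eq_win_iff {E : Type} [Nonempty E] (p q : ℕ) {A B : ℤ} (i : ℤ) (φ : Pat E A B)
    (χ : Pat E (-(p : ℤ)) (q : ℤ)) :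
    χ = win p q i φ ↔ ∀ v ∈ Finset.Icc (-(p : ℤ)) (q : ℤ), ev χ v = ev φ (i + v) := by
  constructor
  · rintro rfl v hv
    exact ev_win p q i φ v hv
  · intro h
    funext v
    have := h v.1 v.2
    rw [ev, dif_pos v.2] at this
    exact this

lemma Pr_beta {E : Type} [Fintype E] [DecidableEq E] [Nonempty E]
    (p q : ℕ) (t u : ℤ) (g : Pat E (-(p : ℤ) - t) ((q : ℤ) + u) → ℝ) (i : ℤ)
    (P : Pat E (-(p : ℤ)) (q : ℤ) → Prop) :
    Pr (beta p q t u g i) P = Pr g (fun χ => P (win p q i χ)) := by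
  have h1 : ∀ x : Pat E (-(p : ℤ)) (q : ℤ), (if P x then beta p q t u g i x else 0) =
      ∑ χ, if win p q i χ = x then (if P x then g χ else 0) else 0 := by
    intro x
    by_cases h : P x
    · simp only [h, beta, Pr, if_true]
      refine Finset.sum_congr rfl fun χ _ => ?_
      congr
    · simp [h]
  unfold Pr
  rw [Finset.sum_congr rfl (fun x _ => h1 x), Finset.sum_comm]
  refine Finset.sum_congr rfl fun χ _ => ?_
  simp

lemma alpha_step (E : Type) [Fintype E] [DecidableEq E] [Nonempty E]
    (p q : ℕ) (t u : ℤ)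
    (gtil : Pat E (-(p : ℤ) - t) ((q : ℤ) + u) → ℝ)
    (g : ℤ → Pat E (-(p : ℤ)) (q : ℤ) → ℝ)
    (hg : ∀ j ∈ Finset.Icc (-t) u, g j = beta p q t u gtil j)
    (i : ℤ) (hi : -t ≤ i) (hi' : i + 1 ≤ u) :
    alpha p q t u g i = alpha p q t u g (i + 1) := by
  funext ψ
  have hD : Pr (g i)
        (fun χ => ∀ v ∈ Finset.Icc (-(p : ℤ) + 1) (q : ℤ), ev χ v = ev ψ (i + v)) =
      Pr (g (i + 1))
        (fun χ => ∀ v ∈ Finset.Icc (-(p : ℤ)) ((q : ℤ) - 1), ev χ v = ev ψ (i + 1 + v)) := by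
    rw [hg i (Finset.mem_Icc.2 ⟨hi, by omega⟩), hg (i + 1) (Finset.mem_Icc.2 ⟨by omega, hi'⟩),
      Pr_beta, Pr_beta]
    apply Pr_congr'
    intro χ
    simp only [Finset.mem_Icc]
    constructor
    · intro h v hv
      have := h (v + 1) (by omega)
      rw [ev_win _ _ _ _ _ (Finset.mem_Icc.2 (by omega))] at this ⊢
      rw [show i + 1 + v = i + (v + 1) by ring]
      exact this
    · intro h v hv
      have := h (v - 1) (by omega)
      rw [ev_win _ _ _ _ _ (Finset.mem_Icc.2 (by omega))] at this ⊢
      rw [show i + 1 + (v - 1) = i + v by ring] at this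
      exact this
  have hb : condPr (g i) (fun χ => ev χ (-(p : ℤ)) = ev ψ (i + -(p : ℤ)))
        (fun χ => ∀ v ∈ Finset.Icc (-(p : ℤ) + 1) (q : ℤ), ev χ v = ev ψ (i + v)) =
      g i (win p q i ψ) / Pr (g i)
        (fun χ => ∀ v ∈ Finset.Icc (-(p : ℤ) + 1) (q : ℤ), ev χ v = ev ψ (i + v)) := by
    unfold condPr
    congr 1
    apply Pr_eq_single
    intro χ
    rw [eq_win_iff]
    simp only [Finset.mem_Icc]
    constructor
    · rintro ⟨h1, h2⟩ v hv
      rcases eq_or_ne v (-(p : ℤ)) with rfl | hne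
      · exact h1
      · exact h2 v (by omega)
    · intro h
      exact ⟨h _ (by omega), fun v hv => h v (by omega)⟩
  have hc : condPr (g (i + 1)) (fun χ => ev χ (q : ℤ) = ev ψ (i + 1 + (q : ℤ)))
        (fun χ => ∀ v ∈ Finset.Icc (-(p : ℤ)) ((q : ℤ) - 1), ev χ v = ev ψ (i + 1 + v)) =
      g (i + 1) (win p q (i + 1) ψ) / Pr (g (i + 1))
        (fun χ => ∀ v ∈ Finset.Icc (-(p : ℤ)) ((q : ℤ) - 1), ev χ v = ev ψ (i + 1 + v)) := by
    unfold condPr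
    congr 1
    apply Pr_eq_single
    intro χ
    rw [eq_win_iff]
    simp only [Finset.mem_Icc]
    constructor
    · rintro ⟨h1, h2⟩ v hv
      rcases eq_or_ne v (q : ℤ) with rfl | hne
      · exact h1
      · exact h2 v (by omega)
    · intro h
      exact ⟨h _ (by omega), fun v hv => h v (by omega)⟩
  have e1 : Finset.Icc (-t) (i + 1 - 1) = insert i (Finset.Icc (-t) (i - 1)) := by
    ext x; simp only [Finset.mem_Icc, Finset.mem_insert]; omega
  have e2 : Finset.Icc (i + 1) u = insert (i + 1) (Finset.Icc (i + 1 + 1) u) := by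
    ext x; simp only [Finset.mem_Icc, Finset.mem_insert]; omega
  unfold alpha
  rw [e1, e2, Finset.prod_insert (by simp), Finset.prod_insert (by simp), hb, hc, hD]
  ring

/-- site independence of the reconstruction on the image of `β_W`. -/
theorem stmt_5
    (E : Type) [Fintype E] [DecidableEq E] [Nonempty E]
    (p q : ℕ) (t u : ℤ) (htu : -t ≤ u)
    (gtil : Pat E (-(p : ℤ) - t) ((q : ℤ) + u) → ℝ) (hgtil : IsDensity gtil)
    (g : ℤ → Pat E (-(p : ℤ)) (q : ℤ) → ℝ)
    (hg : ∀ j ∈ Finset.Icc (-t) u, g j = beta p q t u gtil j)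
    (i : ℤ) (hi : i ∈ Finset.Icc (-t) u) (j : ℤ) (hj : j ∈ Finset.Icc (-t) u) :
    alpha p q t u g i = alpha p q t u g j := by
  simp only [Finset.mem_Icc] at hi hj
  have key : ∀ n : ℕ, -t + n ≤ u → alpha p q t u g (-t + n) = alpha p q t u g (-t) := by
    intro n
    induction n with
    | zero => intro _; simp
    | succ n ih =>
      intro h
      push_cast at h ⊢
      rw [← ih (by omega), alpha_step E p q t u gtil g hg (-t + n) (by omega) (by omega), add_assoc]
  have k1 := key (i + t).toNat (by omega)
  have k2 := key (j + t).toNat (by omega)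
  rw [show -t + ((i + t).toNat : ℤ) = i by omega] at k1
  rw [show -t + ((j + t).toNat : ℤ) = j by omega] at k2
  rw [k1, k2]
end

section
/- β_W is a left inverse of α_{W,i} on the image of β_W: for every density g̃ on E^{V+W} and every i ∈ W, β_W(α_{W,i}(β_W(g̃))) = β_W(g̃). -/
open Finset
open scoped Classical

namespace Aux6

theorem prod_right (f : ℤ → ℝ) (a b : ℤ) (h : a ≤ b) :
    ∏ k ∈ Finset.Icc a b, f k = (∏ k ∈ Finset.Icc a (b - 1), f k) * f b := by
  have : Finset.Icc a b = insert b (Finset.Icc a (b - 1)) := by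
    ext x; simp only [Finset.mem_Icc, Finset.mem_insert]; omega
  rw [this, Finset.prod_insert (by simp), mul_comm]

theorem prod_left (f : ℤ → ℝ) (a b : ℤ) (h : a ≤ b) :
    ∏ k ∈ Finset.Icc a b, f k = f a * ∏ k ∈ Finset.Icc (a + 1) b, f k := by
  have : Finset.Icc a b = insert a (Finset.Icc (a + 1) b) := by
    ext x; simp only [Finset.mem_Icc, Finset.mem_insert]; omega
  rw [this, Finset.prod_insert (by simp)]

theorem ite_and_mul (P Q : Prop) {_ : Decidable P} {_ : Decidable Q} {_ : Decidable (P ∧ Q)} :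
    (if P ∧ Q then (1 : ℝ) else 0) = (if Q then 1 else 0) * (if P then 1 else 0) := by
  by_cases hP : P <;> by_cases hQ : Q <;> simp [hP, hQ]

/-- Exchange a normalized factor at the site `x` for a Dirac factor. -/
theorem step {E : Type} [Fintype E] {ι : Type} [Fintype ι] [DecidableEq ι]
    (h c : (ι → E) → ℝ) (x : ι) (e0 : E)
    (hind : ∀ ψ e, h (Function.update ψ x e) = h ψ)
    (hc : ∀ ψ, h ψ ≠ 0 → ∑ e, c (Function.update ψ x e) = 1) :
    ∑ ψ, h ψ * c ψ = ∑ ψ, h ψ * (if ψ x = e0 then 1 else 0) := by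
  have key : ∀ F : (ι → E) → ℝ, ∑ ψ, F ψ =
      ∑ r : ({j // j ≠ x} → E), ∑ e, F (Function.update ((Equiv.funSplitAt x E).symm (e0, r)) x e) := by
    intro F
    rw [← (Equiv.funSplitAt x E).symm.sum_comp, Fintype.sum_prod_type, Finset.sum_comm]
    refine Finset.sum_congr rfl fun r _ => Finset.sum_congr rfl fun e _ => ?_
    congr 1
    ext y
    by_cases hy : y = x
    · subst hy; simp [Equiv.funSplitAt, Equiv.piSplitAt]
    · simp [Equiv.funSplitAt, Equiv.piSplitAt, hy]
  rw [key, key (fun ψ => h ψ * (if ψ x = e0 then 1 else 0))]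
  refine Finset.sum_congr rfl fun r _ => ?_
  simp only [hind, ← Finset.mul_sum]
  by_cases h0 : h ((Equiv.funSplitAt x E).symm (e0, r)) = 0
  · simp [h0]
  · rw [hc _ h0]; simp

theorem ev_of_mem {E : Type} [Nonempty E] {A B : ℤ} (φ : Pat E A B) (j : ℤ)
    (h : j ∈ Finset.Icc A B) : ev φ j = φ ⟨j, h⟩ := by
  simp only [ev, dif_pos h]

theorem ev_update_ne {E : Type} [Nonempty E] {A B : ℤ} (φ : Pat E A B)
    (x : {x // x ∈ Finset.Icc A B}) (e : E) (y : ℤ) (h : y ≠ x.1) :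
    ev (Function.update φ x e) y = ev φ y := by
  unfold ev
  split_ifs with hy
  · rw [Function.update_of_ne]
    intro h'; apply h; rw [← h']
  · rfl

theorem ev_update_self {E : Type} [Nonempty E] {A B : ℤ} (φ : Pat E A B)
    (x : {x // x ∈ Finset.Icc A B}) (e : E) :
    ev (Function.update φ x e) x.1 = e := by
  rw [ev_of_mem _ _ x.2]; simp

/-- cylinder probability -/
noncomputable def N {E : Type} [Fintype E] [Nonempty E] {A B : ℤ} (g : Pat E A B → ℝ)
    (a b : ℤ) (ψ : Pat E A B) : ℝ :=
  Pr g (fun χ => ∀ x ∈ Finset.Icc a b, ev χ x = ev ψ x)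

variable {E : Type} [Fintype E] [Nonempty E] {A B : ℤ} (g : Pat E A B → ℝ)

theorem N_congr (a b : ℤ) (ψ ψ' : Pat E A B)
    (h : ∀ x ∈ Finset.Icc a b, ev ψ x = ev ψ' x) : N g a b ψ = N g a b ψ' := by
  unfold N
  congr 1
  ext χ
  exact forall₂_congr fun x hx => by rw [h x hx]

theorem N_update (a b : ℤ) (ψ : Pat E A B) (x : {x // x ∈ Finset.Icc A B}) (e : E)
    (h : x.1 ∉ Finset.Icc a b) : N g a b (Function.update ψ x e) = N g a b ψ :=
  N_congr g a b _ _ fun y hy => ev_update_ne _ _ _ _ (by rintro rfl; exact h hy)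

theorem N_zero (hg : ∀ x, 0 ≤ g x) (a b a' b' : ℤ) (ha : a' ≤ a) (hb : b ≤ b') (ψ : Pat E A B)
    (h : N g a b ψ = 0) : N g a' b' ψ = 0 := by
  have h1 : N g a' b' ψ ≤ N g a b ψ := by
    unfold N Pr
    refine Finset.sum_le_sum fun χ _ => ?_
    by_cases h1 : ∀ x ∈ Finset.Icc a' b', ev χ x = ev ψ x
    · rw [if_pos h1, if_pos]
      intro x hx
      apply h1
      simp only [Finset.mem_Icc] at hx ⊢; omega
    · rw [if_neg h1]
      split_ifs
      · exact hg χ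
      · exact le_rfl
  have h2 : 0 ≤ N g a' b' ψ := by
    unfold N Pr
    exact Finset.sum_nonneg fun χ _ => by split_ifs <;> simp [hg]
  linarith

theorem N_sum (a b a' b' : ℤ) (ψ : Pat E A B) (x : {x // x ∈ Finset.Icc A B})
    (hx : ∀ y, y ∈ Finset.Icc a' b' ↔ y = x.1 ∨ y ∈ Finset.Icc a b)
    (hn : x.1 ∉ Finset.Icc a b) :
    ∑ e, N g a' b' (Function.update ψ x e) = N g a b ψ := by
  unfold N Pr
  rw [Finset.sum_comm]
  refine Finset.sum_congr rfl fun χ _ => ?_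
  have : ∀ e, (∀ y ∈ Finset.Icc a' b', ev χ y = ev (Function.update ψ x e) y) ↔
      (ev χ x.1 = e ∧ ∀ y ∈ Finset.Icc a b, ev χ y = ev ψ y) := by
    intro e
    simp only [hx, forall_eq_or_imp, ev_update_self]
    refine and_congr_right fun _ => forall₂_congr fun y hy => ?_
    rw [ev_update_ne]
    rintro rfl; exact hn hy
  simp only [this]
  by_cases h : ∀ y ∈ Finset.Icc a b, ev χ y = ev ψ y
  · rw [if_pos h]
    have h' : ∀ e, (ev χ x.1 = e ∧ ∀ y ∈ Finset.Icc a b, ev χ y = ev ψ y) ↔ ev χ x.1 = e :=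
      fun e => and_iff_left h
    simp only [h']
    simp
  · simp only [h, and_false, if_false]
    simp

theorem Pr_push {α γ : Type} [Fintype α] [Fintype γ] (f : α → ℝ) (w : α → γ) (P : γ → Prop) :
    Pr (fun y => Pr f (fun x => w x = y)) P = Pr f (fun x => P (w x)) := by
  unfold Pr
  have : ∀ y, (if P y then ∑ x, (if w x = y then f x else 0) else 0) =
      ∑ x, if w x = y then (if P y then f x else 0) else 0 := by
    intro y
    split_ifs <;> simp
  simp only [this]
  rw [Finset.sum_comm]
  simp

theorem ev_win (p q : ℕ) (i v : ℤ) (φ : Pat E A B) (hv : v ∈ Finset.Icc (-(p : ℤ)) (q : ℤ)) :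
    ev (win p q i φ) v = ev φ (i + v) := by
  rw [ev_of_mem _ _ hv]; rfl

theorem win_eq_iff (p q : ℕ) (i : ℤ) (φ ψ : Pat E A B) :
    win p q i φ = win p q i ψ ↔ ∀ x ∈ Finset.Icc (i - p) (i + q), ev φ x = ev ψ x := by
  constructor
  · intro h x hx
    simp only [Finset.mem_Icc] at hx
    have hm : x - i ∈ Finset.Icc (-(p : ℤ)) (q : ℤ) := by simp only [Finset.mem_Icc]; omega
    have := congrFun h ⟨x - i, hm⟩
    simpa [win] using this
  · intro h
    ext v
    have := v.2
    simp only [Finset.mem_Icc] at this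
    exact h _ (by simp only [Finset.mem_Icc]; omega)

noncomputable def Lf (p q : ℕ) (k : ℤ) (ψ : Pat E A B) : ℝ :=
  N g (k - p) (k + q) ψ / N g (k - p + 1) (k + q) ψ

noncomputable def Rf (p q : ℕ) (k : ℤ) (ψ : Pat E A B) : ℝ :=
  N g (k - p) (k + q) ψ / N g (k - p) (k + q - 1) ψ

theorem alpha_eq [DecidableEq E] (p q : ℕ) (t u : ℤ)
    (g : Pat E (-(p : ℤ) - t) ((q : ℤ) + u) → ℝ) (i : ℤ)
    (ψ : Pat E (-(p : ℤ) - t) ((q : ℤ) + u)) :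
    alpha p q t u (beta p q t u g) i ψ =
      (∏ k ∈ Finset.Icc (-t) (i - 1), Lf g p q k ψ) * N g (i - p) (i + q) ψ *
        ∏ k ∈ Finset.Icc (i + 1) u, Rf g p q k ψ := by
  have hb : ∀ k P, Pr (beta p q t u g k) P = Pr g (fun χ => P (win p q k χ)) :=
    fun k P => Pr_push g (win p q k) P
  unfold alpha condPr Lf Rf
  simp only [hb]
  congr 1
  · congr 1
    · refine Finset.prod_congr rfl fun k _ => ?_
      have e2 : ∀ χ : Pat E (-(p : ℤ) - t) ((q : ℤ) + u),
          (∀ v ∈ Finset.Icc (-(p : ℤ) + 1) (q : ℤ), ev (win p q k χ) v = ev ψ (k + v)) ↔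
          ∀ x ∈ Finset.Icc (k - p + 1) (k + q), ev χ x = ev ψ x := by
        intro χ
        constructor
        · intro h x hx
          simp only [Finset.mem_Icc] at hx
          have := h (x - k) (by simp only [Finset.mem_Icc]; omega)
          rw [ev_win _ _ _ _ _ (by simp only [Finset.mem_Icc]; omega)] at this
          simpa using this
        · intro h v hv
          simp only [Finset.mem_Icc] at hv
          rw [ev_win _ _ _ _ _ (by simp only [Finset.mem_Icc]; omega)]
          exact h _ (by simp only [Finset.mem_Icc]; omega)
      have e1 : ∀ χ : Pat E (-(p : ℤ) - t) ((q : ℤ) + u),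
          (ev (win p q k χ) (-(p : ℤ)) = ev ψ (k + -(p : ℤ)) ∧
            ∀ x ∈ Finset.Icc (k - p + 1) (k + q), ev χ x = ev ψ x) ↔
          ∀ x ∈ Finset.Icc (k - p) (k + q), ev χ x = ev ψ x := by
        intro χ
        rw [ev_win _ _ _ _ _ (by simp only [Finset.mem_Icc]; omega)]
        have : Finset.Icc (k - p) (k + q) = insert (k + -(p : ℤ)) (Finset.Icc (k - p + 1) (k + q)) := by
          ext x; simp only [Finset.mem_Icc, Finset.mem_insert]; omega
        rw [this]; simp only [Finset.mem_insert, forall_eq_or_imp]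
      simp only [e2, e1]
      rfl
    · unfold beta N
      simp only [win_eq_iff]
  · refine Finset.prod_congr rfl fun k _ => ?_
    have e2 : ∀ χ : Pat E (-(p : ℤ) - t) ((q : ℤ) + u),
        (∀ v ∈ Finset.Icc (-(p : ℤ)) (q - 1 : ℤ), ev (win p q k χ) v = ev ψ (k + v)) ↔
        ∀ x ∈ Finset.Icc (k - p) (k + q - 1), ev χ x = ev ψ x := by
      intro χ
      constructor
      · intro h x hx
        simp only [Finset.mem_Icc] at hx
        have := h (x - k) (by simp only [Finset.mem_Icc]; omega)
        rw [ev_win _ _ _ _ _ (by simp only [Finset.mem_Icc]; omega)] at this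
        simpa using this
      · intro h v hv
        simp only [Finset.mem_Icc] at hv
        rw [ev_win _ _ _ _ _ (by simp only [Finset.mem_Icc]; omega)]
        exact h _ (by simp only [Finset.mem_Icc]; omega)
    have e1 : ∀ χ : Pat E (-(p : ℤ) - t) ((q : ℤ) + u),
        (ev (win p q k χ) (q : ℤ) = ev ψ (k + (q : ℤ)) ∧
          ∀ x ∈ Finset.Icc (k - p) (k + q - 1), ev χ x = ev ψ x) ↔
        ∀ x ∈ Finset.Icc (k - p) (k + q), ev χ x = ev ψ x := by
      intro χ
      rw [ev_win _ _ _ _ _ (by simp only [Finset.mem_Icc]; omega)]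
      have : Finset.Icc (k - p) (k + q) = insert (k + (q : ℤ)) (Finset.Icc (k - p) (k + q - 1)) := by
        ext x; simp only [Finset.mem_Icc, Finset.mem_insert]; omega
      rw [this]; simp only [Finset.mem_insert, forall_eq_or_imp]
    simp only [e2, e1]
    rfl

noncomputable def Al (p q : ℕ) (t u i : ℤ) (ψ : Pat E A B) : ℝ :=
  (∏ k ∈ Finset.Icc (-t) (i - 1), Lf g p q k ψ) * N g (i - p) (i + q) ψ *
        ∏ k ∈ Finset.Icc (i + 1) u, Rf g p q k ψ

theorem Al_succ (p q : ℕ) (t u i : ℤ) (h1 : -t ≤ i) (h2 : i < u) (ψ : Pat E A B) :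
    Al g p q t u (i + 1) ψ = Al g p q t u i ψ := by
  unfold Al
  rw [prod_left _ (i + 1) u (by omega), prod_right _ (-t) (i + 1 - 1) (by omega)]
  have e : i + 1 - 1 = i := by ring
  rw [e]
  unfold Lf Rf
  have e1 : i + 1 - (p : ℤ) = i - p + 1 := by ring
  have e2 : i + 1 + (q : ℤ) - 1 = i + q := by ring
  rw [e1, e2]
  ring

theorem Al_const (p q : ℕ) (t u i : ℤ) (h1 : -t ≤ i) (h2 : i ≤ u) (ψ : Pat E A B) :
    Al g p q t u i ψ = Al g p q t u (-t) ψ := by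
  induction i, h1 using Int.leInduction with
  | base => rfl
  | succ n hn ih => rw [Al_succ g p q t u n hn (by omega), ih (by omega)]

noncomputable def G (p q : ℕ) (j : ℤ) (φ : Pat E (-(p : ℤ)) (q : ℤ)) (e0 : E) (a b : ℤ)
    (ψ : Pat E A B) : ℝ :=
  (if win p q j ψ = φ then 1 else 0) * (∏ k ∈ Finset.Icc a (j - 1), Lf g p q k ψ) *
    N g (j - p) (j + q) ψ * (∏ k ∈ Finset.Icc (j + 1) b, Rf g p q k ψ) *
    (if ∀ x ∈ Finset.Icc A (a - 1 - p), ev ψ x = e0 then 1 else 0) *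
    (if ∀ x ∈ Finset.Icc (b + 1 + q) B, ev ψ x = e0 then 1 else 0)

theorem win_update (p q : ℕ) (j : ℤ) (ψ : Pat E A B) (x : {x // x ∈ Finset.Icc A B}) (e : E)
    (hx : x.1 ∉ Finset.Icc (j - p) (j + q)) :
    win p q j (Function.update ψ x e) = win p q j ψ := by
  rw [win_eq_iff]
  intro y hy
  exact ev_update_ne _ _ _ _ (by rintro rfl; exact hx hy)

theorem all_update (a b : ℤ) (e0 : E) (ψ : Pat E A B) (x : {x // x ∈ Finset.Icc A B}) (e : E)
    (hx : x.1 ∉ Finset.Icc a b) :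
    (∀ y ∈ Finset.Icc a b, ev (Function.update ψ x e) y = e0) ↔
      ∀ y ∈ Finset.Icc a b, ev ψ y = e0 := by
  refine forall₂_congr fun y hy => ?_
  rw [ev_update_ne]
  rintro rfl; exact hx hy

theorem Lf_update (p q : ℕ) (k : ℤ) (ψ : Pat E A B) (x : {x // x ∈ Finset.Icc A B}) (e : E)
    (hx : x.1 ∉ Finset.Icc (k - p) (k + q)) :
    Lf g p q k (Function.update ψ x e) = Lf g p q k ψ := by
  unfold Lf
  rw [N_update _ _ _ _ _ _ hx, N_update]
  simp only [Finset.mem_Icc] at hx ⊢; omega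

theorem Rf_update (p q : ℕ) (k : ℤ) (ψ : Pat E A B) (x : {x // x ∈ Finset.Icc A B}) (e : E)
    (hx : x.1 ∉ Finset.Icc (k - p) (k + q)) :
    Rf g p q k (Function.update ψ x e) = Rf g p q k ψ := by
  unfold Rf
  rw [N_update _ _ _ _ _ _ hx, N_update]
  simp only [Finset.mem_Icc] at hx ⊢; omega

theorem G_right (hg : ∀ x, 0 ≤ g x) (p q : ℕ) (j : ℤ) (φ : Pat E (-(p : ℤ)) (q : ℤ)) (e0 : E)
    (a b : ℤ) (ha : A ≤ a - p) (haj : a ≤ j) (hj : j ≤ b) (hb : b + 1 + q ≤ B) :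
    ∑ ψ, G g p q j φ e0 a (b + 1) ψ = ∑ ψ, G g p q j φ e0 a b ψ := by
  have hx : b + 1 + q ∈ Finset.Icc A B := by simp only [Finset.mem_Icc]; omega
  have := step (fun ψ : Pat E A B => (if win p q j ψ = φ then 1 else 0) *
      (∏ k ∈ Finset.Icc a (j - 1), Lf g p q k ψ) *
      N g (j - p) (j + q) ψ * (∏ k ∈ Finset.Icc (j + 1) b, Rf g p q k ψ) *
      (if ∀ x ∈ Finset.Icc A (a - 1 - p), ev ψ x = e0 then 1 else 0) *
      (if ∀ x ∈ Finset.Icc (b + 1 + 1 + q) B, ev ψ x = e0 then 1 else 0))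
      (fun ψ => Rf g p q (b + 1) ψ) ⟨b + 1 + q, hx⟩ e0 ?_ ?_
  · refine Eq.trans (Finset.sum_congr rfl fun ψ _ => ?_)
      (this.trans (Finset.sum_congr rfl fun ψ _ => ?_))
    · unfold G
      rw [prod_right _ (j + 1) (b + 1) (by omega), add_sub_cancel_right]
      ring
    · unfold G
      rw [mul_assoc _ _ (ite (ψ _ = e0) _ _)]
      congr 1
      rw [← ev_of_mem ψ (b + 1 + q) hx]
      have : Finset.Icc (b + 1 + q) B = insert (b + 1 + (q : ℤ)) (Finset.Icc (b + 1 + 1 + q) B) := by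
        ext x; simp only [Finset.mem_Icc, Finset.mem_insert]; omega
      simp only [this, Finset.mem_insert, forall_eq_or_imp]
      exact (ite_and_mul _ _).symm
  · intro ψ e
    rw [win_update, N_update, all_update, all_update]
    · congr 3
      · congr 2
        · refine Finset.prod_congr rfl fun k hk => Lf_update _ _ _ _ _ _ _ ?_
          simp only [Finset.mem_Icc] at hk ⊢; omega
      · refine Finset.prod_congr rfl fun k hk => Rf_update _ _ _ _ _ _ _ ?_
        simp only [Finset.mem_Icc] at hk ⊢; omega
    all_goals simp only [Finset.mem_Icc]; omega
  · intro ψ hψ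
    have hN : N g (b + 1 - p) (b + 1 + q - 1) ψ ≠ 0 := by
      intro h0
      apply hψ
      have hz : N g (b - p) (b + q) ψ = 0 := N_zero g hg _ _ _ _ (by omega) (by omega) ψ h0
      rcases hj.eq_or_lt with rfl | hlt
      · simp [hz]
      · rw [prod_right _ (j + 1) b (by omega)]
        simp [Rf, hz]
    unfold Rf
    have : ∀ e, N g (b + 1 - p) (b + 1 + q - 1) (Function.update ψ ⟨b + 1 + q, hx⟩ e) =
        N g (b + 1 - p) (b + 1 + q - 1) ψ := fun e =>
      N_update _ _ _ _ _ _ (by simp only [Finset.mem_Icc]; omega)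
    simp only [this]
    rw [← Finset.sum_div, N_sum g (b + 1 - p) (b + 1 + q - 1), div_self hN]
    · intro y; simp only [Finset.mem_Icc]; omega
    · simp only [Finset.mem_Icc]; omega

theorem G_left (hg : ∀ x, 0 ≤ g x) (p q : ℕ) (j : ℤ) (φ : Pat E (-(p : ℤ)) (q : ℤ)) (e0 : E)
    (a b : ℤ) (ha : A ≤ a - 1 - p) (haj : a ≤ j) (hj : j ≤ b) (hb : b + q ≤ B) :
    ∑ ψ, G g p q j φ e0 (a - 1) b ψ = ∑ ψ, G g p q j φ e0 a b ψ := by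
  have hx : a - 1 - p ∈ Finset.Icc A B := by simp only [Finset.mem_Icc]; omega
  have := step (fun ψ : Pat E A B => (if win p q j ψ = φ then 1 else 0) *
      (∏ k ∈ Finset.Icc a (j - 1), Lf g p q k ψ) *
      N g (j - p) (j + q) ψ * (∏ k ∈ Finset.Icc (j + 1) b, Rf g p q k ψ) *
      (if ∀ x ∈ Finset.Icc A (a - 1 - 1 - p), ev ψ x = e0 then 1 else 0) *
      (if ∀ x ∈ Finset.Icc (b + 1 + q) B, ev ψ x = e0 then 1 else 0))
      (fun ψ => Lf g p q (a - 1) ψ) ⟨a - 1 - p, hx⟩ e0 ?_ ?_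
  · refine Eq.trans (Finset.sum_congr rfl fun ψ _ => ?_)
      (this.trans (Finset.sum_congr rfl fun ψ _ => ?_))
    · unfold G
      rw [prod_left _ (a - 1) (j - 1) (by omega), sub_add_cancel]
      ring
    · unfold G
      rw [mul_right_comm _ _ (ite (ψ _ = e0) _ _)]
      congr 1
      rw [mul_assoc _ _ (ite (ψ _ = e0) _ _)]
      congr 1
      rw [← ev_of_mem ψ (a - 1 - p) hx]
      have : Finset.Icc A (a - 1 - p) = insert (a - 1 - (p : ℤ)) (Finset.Icc A (a - 1 - 1 - p)) := by
        ext x; simp only [Finset.mem_Icc, Finset.mem_insert]; omega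
      simp only [this, Finset.mem_insert, forall_eq_or_imp]
      exact (ite_and_mul _ _).symm
  · intro ψ e
    rw [win_update, N_update, all_update, all_update]
    · congr 3
      · congr 2
        · refine Finset.prod_congr rfl fun k hk => Lf_update _ _ _ _ _ _ _ ?_
          simp only [Finset.mem_Icc] at hk ⊢; omega
      · refine Finset.prod_congr rfl fun k hk => Rf_update _ _ _ _ _ _ _ ?_
        simp only [Finset.mem_Icc] at hk ⊢; omega
    all_goals simp only [Finset.mem_Icc]; omega
  · intro ψ hψ
    have hN : N g (a - 1 - p + 1) (a - 1 + q) ψ ≠ 0 := by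
      intro h0
      apply hψ
      have hz : N g (a - p) (a + q) ψ = 0 := N_zero g hg _ _ _ _ (by omega) (by omega) ψ h0
      rcases haj.eq_or_lt with rfl | hlt
      · simp [hz]
      · rw [prod_left _ a (j - 1) (by omega)]
        simp [Lf, hz]
    unfold Lf
    have : ∀ e, N g (a - 1 - p + 1) (a - 1 + q) (Function.update ψ ⟨a - 1 - p, hx⟩ e) =
        N g (a - 1 - p + 1) (a - 1 + q) ψ := fun e =>
      N_update _ _ _ _ _ _ (by simp only [Finset.mem_Icc]; omega)
    simp only [this]
    rw [← Finset.sum_div, N_sum g (a - 1 - p + 1) (a - 1 + q), div_self hN]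
    · intro y; simp only [Finset.mem_Icc]; omega
    · simp only [Finset.mem_Icc]; omega

theorem G_right_all (hg : ∀ x, 0 ≤ g x) (p q : ℕ) (j : ℤ) (φ : Pat E (-(p : ℤ)) (q : ℤ)) (e0 : E)
    (a b : ℤ) (ha : A ≤ a - p) (haj : a ≤ j) (hj : j ≤ b) (hb : b + q ≤ B) :
    ∑ ψ, G g p q j φ e0 a b ψ = ∑ ψ, G g p q j φ e0 a j ψ := by
  induction b, hj using Int.leInduction with
  | base => rfl
  | succ n hn ih => rw [G_right g hg p q j φ e0 a n ha haj hn (by omega), ih (by omega)]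

theorem G_left_all (hg : ∀ x, 0 ≤ g x) (p q : ℕ) (j : ℤ) (φ : Pat E (-(p : ℤ)) (q : ℤ)) (e0 : E)
    (a b : ℤ) (ha : A ≤ a - p) (haj : a ≤ j) (hj : j ≤ b) (hb : b + q ≤ B) :
    ∑ ψ, G g p q j φ e0 a b ψ = ∑ ψ, G g p q j φ e0 j b ψ := by
  induction a, haj using Int.leInductionDown with
  | base => rfl
  | pred n hn ih => rw [G_left g hg p q j φ e0 n b ha hn hj hb, ih (by omega)]

theorem G_final (p q : ℕ) (j : ℤ) (φ : Pat E (-(p : ℤ)) (q : ℤ)) (e0 : E)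
    (ha : A ≤ j - p) (hb : j + q ≤ B) :
    ∑ ψ, G g p q j φ e0 j j ψ = Pr g (fun χ => win p q j χ = φ) := by
  let ψ0 : Pat E A B := fun x =>
    if h : x.1 - j ∈ Finset.Icc (-(p : ℤ)) (q : ℤ) then φ ⟨x.1 - j, h⟩ else e0
  have hw : win p q j ψ0 = φ := by
    ext v
    have hv := v.2
    simp only [Finset.mem_Icc] at hv
    unfold win
    rw [ev_of_mem _ _ (by simp only [Finset.mem_Icc]; omega)]
    simp only [ψ0]
    rw [dif_pos (by simp only [Finset.mem_Icc]; omega)]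
    congr 1
    ext
    simp
  have h0 : ∀ x ∈ Finset.Icc A B, x ∉ Finset.Icc (j - p) (j + q) → ev ψ0 x = e0 := by
    intro x hx hn
    rw [ev_of_mem _ _ hx]
    simp only [ψ0]
    rw [dif_neg]
    simp only [Finset.mem_Icc] at hn ⊢; omega
  rw [Finset.sum_eq_single ψ0]
  · unfold G
    rw [if_pos hw, if_pos, if_pos]
    · simp only [Finset.Icc_eq_empty (show ¬ j ≤ j - 1 by omega),
        Finset.Icc_eq_empty (show ¬ j + 1 ≤ j by omega), Finset.prod_empty, one_mul, mul_one]
      unfold N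
      simp only [← win_eq_iff, hw]
    all_goals
      intro x hx
      simp only [Finset.mem_Icc] at hx
      apply h0 <;> simp only [Finset.mem_Icc] <;> omega
  · intro ψ _ hne
    by_contra hG
    apply hne
    unfold G at hG
    simp only [mul_ne_zero_iff, ne_eq, ite_eq_right_iff, one_ne_zero, imp_false, not_not] at hG
    obtain ⟨⟨⟨⟨⟨h1, -⟩, -⟩, -⟩, h2⟩, h3⟩ := hG
    have h4 := (win_eq_iff p q j ψ ψ0).1 (h1.trans hw.symm)
    ext x
    rw [← ev_of_mem ψ x.1 x.2, ← ev_of_mem ψ0 x.1 x.2]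
    by_cases hx : x.1 ∈ Finset.Icc (j - p) (j + q)
    · exact h4 _ hx
    · rw [h0 _ x.2 hx]
      have hx2 := x.2
      simp only [Finset.mem_Icc] at hx hx2
      by_cases hl : x.1 < j - p
      · exact h2 _ (by simp only [Finset.mem_Icc]; omega)
      · exact h3 _ (by simp only [Finset.mem_Icc]; omega)
  · simp

end Aux6

/-- `β_W` is a left inverse of `α_{W,i}` on the image of `β_W`. -/
theorem stmt_6
    (E : Type) [Fintype E] [DecidableEq E] [Nonempty E]
    (p q : ℕ) (t u : ℤ) (htu : -t ≤ u)
    (gtil : Pat E (-(p : ℤ) - t) ((q : ℤ) + u) → ℝ) (hgtil : IsDensity gtil)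
    (i : ℤ) (hi : i ∈ Finset.Icc (-t) u) :
    ∀ j ∈ Finset.Icc (-t) u,
      beta p q t u (alpha p q t u (beta p q t u gtil) i) j = beta p q t u gtil j := by
  intro j hj
  rw [Finset.mem_Icc] at hi hj
  have hA : alpha p q t u (beta p q t u gtil) i = Aux6.Al gtil p q t u j := by
    funext ψ
    rw [Aux6.alpha_eq, Aux6.Al_const gtil p q t u j hj.1 hj.2,
      ← Aux6.Al_const gtil p q t u i hi.1 hi.2]
    rfl
  rw [hA]
  funext φ
  let e0 : E := Classical.arbitrary E
  have h1 := Aux6.G_right_all gtil hgtil.1 p q j φ e0 (-t) u (by omega) hj.1 hj.2 (by omega)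
  have h2 := Aux6.G_left_all gtil hgtil.1 p q j φ e0 (-t) j (by omega) hj.1 le_rfl (by omega)
  have h3 := Aux6.G_final gtil p q j φ e0 (by omega) (by omega)
  unfold beta
  rw [← h3, ← h2, ← h1]
  unfold Pr
  refine Finset.sum_congr rfl fun ψ _ => ?_
  unfold Aux6.G
  rw [if_pos (show ∀ x ∈ Finset.Icc (-(p : ℤ) - t) (-t - 1 - p), ev ψ x = e0 by
      intro x hx; simp only [Finset.mem_Icc] at hx; omega),
    if_pos (show ∀ x ∈ Finset.Icc (u + 1 + q) ((q : ℤ) + u), ev ψ x = e0 by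
      intro x hx; simp only [Finset.mem_Icc] at hx; omega)]
  unfold Aux6.Al
  split_ifs <;> ring
end

section
/- Reconstructions from marginals are V-factorizable: for every density g̃ on E^{V+W} and every i ∈ W, the density α_{W,i}(β_W(g̃)) is V-factorizable, i.e. α_{W,i}(β_W(g̃)) = α_{W,j}(β_W(α_{W,i}(β_W(g̃)))) for every j ∈ W. -/
open Finset
open scoped Classical

namespace S7

set_option linter.unusedSectionVars false

variable {E : Type} [Fintype E] [DecidableEq E] [Nonempty E] {A B : ℤ}

noncomputable def M (g : Pat E A B → ℝ) (S : Finset ℤ) (ψ : Pat E A B) : ℝ :=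
  Pr g (fun χ => agreeOn S ψ χ)

noncomputable def upd (ψ : Pat E A B) (b : ℤ) (e : E) : Pat E A B :=
  fun x => if x.1 = b then e else ψ x

lemma ev_upd (ψ : Pat E A B) {b : ℤ} (hb : b ∈ Icc A B) (e : E) (j : ℤ) :
    ev (upd ψ b e) j = if j = b then e else ev ψ j := by
  unfold ev upd
  by_cases h : j = b
  · subst h; simp [hb]
  · simp [h]

lemma ext_ev {χ ψ : Pat E A B} (h : ∀ j ∈ Icc A B, ev χ j = ev ψ j) : χ = ψ := by
  funext x
  have := h x.1 x.2
  simpa [ev, x.2] using this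

lemma M_congr (g : Pat E A B → ℝ) (S : Finset ℤ) {ψ ψ' : Pat E A B}
    (h : ∀ j ∈ S, ev ψ j = ev ψ' j) : M g S ψ = M g S ψ' := by
  unfold M
  congr 1
  funext χ
  unfold agreeOn
  apply propext
  constructor
  · intro H j hj; rw [H j hj, h j hj]
  · intro H j hj; rw [H j hj, h j hj]

lemma M_nonneg {g : Pat E A B → ℝ} (hg : ∀ x, 0 ≤ g x) (S : Finset ℤ) (ψ : Pat E A B) :
    0 ≤ M g S ψ := by
  unfold M Pr
  apply Finset.sum_nonneg
  intro x _
  split_ifs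
  · exact hg x
  · exact le_rfl

lemma M_mono {g : Pat E A B → ℝ} (hg : ∀ x, 0 ≤ g x) {S T : Finset ℤ} (hST : S ⊆ T)
    (ψ : Pat E A B) : M g T ψ ≤ M g S ψ := by
  unfold M Pr
  apply Finset.sum_le_sum
  intro x _
  by_cases h : agreeOn T ψ x
  · have h' : agreeOn S ψ x := fun j hj => h j (hST hj)
    simp [h, h']
  · simp only [h, if_false]
    split_ifs
    · exact hg x
    · exact le_rfl

lemma M_zero {g : Pat E A B → ℝ} (hg : ∀ x, 0 ≤ g x) {S T : Finset ℤ} (hST : S ⊆ T)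
    {ψ : Pat E A B} (h : M g S ψ = 0) : M g T ψ = 0 :=
  le_antisymm (h ▸ M_mono hg hST ψ) (M_nonneg hg T ψ)

lemma M_full (g : Pat E A B → ℝ) (ψ : Pat E A B) : M g (Icc A B) ψ = g ψ := by
  unfold M Pr
  rw [Finset.sum_eq_single ψ]
  · simp [agreeOn]
  · intro x _ hx
    rw [if_neg]
    intro h
    exact hx (ext_ev h)
  · simp

lemma M_marg (g : Pat E A B → ℝ) {S : Finset ℤ} {b : ℤ} (hb : b ∈ Icc A B) (hbS : b ∉ S)
    (ψ : Pat E A B) : M g S ψ = ∑ e, M g (insert b S) (upd ψ b e) := by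
  unfold M Pr
  rw [Finset.sum_comm]
  apply Finset.sum_congr rfl
  intro χ _
  have key : ∀ e, agreeOn (insert b S) (upd ψ b e) χ ↔ (e = ev χ b ∧ agreeOn S ψ χ) := by
    intro e
    unfold agreeOn
    simp only [ev_upd ψ hb, Finset.mem_insert]
    constructor
    · intro H
      refine ⟨by simpa using (H b (Or.inl rfl)).symm, fun j hj => ?_⟩
      have := H j (Or.inr hj)
      rwa [if_neg (by rintro rfl; exact hbS hj)] at this
    · rintro ⟨h1, h2⟩ j (rfl | hj)
      · simp [h1]
      · rw [if_neg (by rintro rfl; exact hbS hj)]; exact h2 j hj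
  simp only [key]
  by_cases h : agreeOn S ψ χ
  · simp [h]
  · simp [h]

/-- summing out one coordinate -/
lemma M_step (f g G : Pat E A B → ℝ) {S C : Finset ℤ} {b : ℤ} (hb : b ∈ Icc A B) (hbS : b ∉ S)
    (hCS : C ⊆ S)
    (hf : ∀ ψ, M f (insert b S) ψ = G ψ * (M g (insert b C) ψ / M g C ψ))
    (hG : ∀ ψ ψ' : Pat E A B, (∀ j ∈ S, ev ψ j = ev ψ' j) → G ψ = G ψ')
    (h0 : ∀ ψ, M g C ψ = 0 → G ψ = 0) (ψ : Pat E A B) : M f S ψ = G ψ := by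
  have hu : ∀ e, ∀ j ∈ S, ev (upd ψ b e) j = ev ψ j := by
    intro e j hj
    rw [ev_upd ψ hb, if_neg (by rintro rfl; exact hbS hj)]
  rw [M_marg f hb hbS]
  have : ∀ e, M f (insert b S) (upd ψ b e)
      = G ψ * (M g (insert b C) (upd ψ b e) / M g C ψ) := by
    intro e
    rw [hf, hG _ ψ (hu e), M_congr g C (fun j hj => hu e j (hCS hj))]
  simp only [this]
  rw [← Finset.mul_sum, ← Finset.sum_div, ← M_marg g hb (fun h => hbS (hCS h))]
  by_cases h : M g C ψ = 0
  · simp [h0 ψ h]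
  · rw [div_self h, mul_one]

noncomputable def F (p q : ℕ) (g : Pat E A B → ℝ) (k a b : ℤ) (ψ : Pat E A B) : ℝ :=
  (∏ l ∈ Icc (a + p) (k - 1), M g (Icc (l - p) (l + q)) ψ / M g (Icc (l - p + 1) (l + q)) ψ) *
    M g (Icc (k - p) (k + q)) ψ *
  (∏ l ∈ Icc (k + 1) (b - q), M g (Icc (l - p) (l + q)) ψ / M g (Icc (l - p) (l + q - 1)) ψ)

lemma F_congr (p q : ℕ) (g : Pat E A B → ℝ) {k a b : ℤ} (ha : a ≤ k - p) (hb : k + q ≤ b)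
    {ψ ψ' : Pat E A B} (h : ∀ j ∈ Icc a b, ev ψ j = ev ψ' j) :
    F p q g k a b ψ = F p q g k a b ψ' := by
  have key : ∀ c d, a ≤ c → d ≤ b → M g (Icc c d) ψ = M g (Icc c d) ψ' := by
    intro c d hc hd
    apply M_congr
    intro j hj
    apply h
    simp only [Finset.mem_Icc] at hj ⊢
    omega
  unfold F
  congr 1
  · congr 1
    · apply Finset.prod_congr rfl
      intro l hl
      simp only [Finset.mem_Icc] at hl
      rw [key _ _ (by omega) (by omega), key _ _ (by omega) (by omega)]
    · exact key _ _ (by omega) (by omega)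
  · apply Finset.prod_congr rfl
    intro l hl
    simp only [Finset.mem_Icc] at hl
    rw [key _ _ (by omega) (by omega), key _ _ (by omega) (by omega)]

lemma insR {a b : ℤ} (h : a ≤ b) : Icc a b = insert b (Icc a (b - 1)) := by
  ext x; simp only [Finset.mem_insert, Finset.mem_Icc]; omega

lemma insL {a b : ℤ} (h : a ≤ b) : Icc a b = insert a (Icc (a + 1) b) := by
  ext x; simp only [Finset.mem_insert, Finset.mem_Icc]; omega

lemma F_right (p q : ℕ) (g : Pat E A B → ℝ) {k a b : ℤ} (hb : k + q + 1 ≤ b) (ψ : Pat E A B) :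
    F p q g k a b ψ = F p q g k a (b - 1) ψ *
      (M g (insert b (Icc (b - q - p) (b - 1))) ψ / M g (Icc (b - q - p) (b - 1)) ψ) := by
  rw [← insR (by omega)]
  unfold F
  rw [insR (show k + 1 ≤ b - q by omega), Finset.prod_insert (by simp)]
  rw [show b - q + q = b by ring, show b - 1 - q = b - q - 1 by ring]
  ring

lemma F_left (p q : ℕ) (g : Pat E A B → ℝ) {k a b : ℤ} (ha : a ≤ k - p - 1) (ψ : Pat E A B) :
    F p q g k a b ψ = F p q g k (a + 1) b ψ *
      (M g (insert a (Icc (a + 1) (a + p + q))) ψ / M g (Icc (a + 1) (a + p + q)) ψ) := by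
  rw [← insL (by omega)]
  unfold F
  rw [insL (show a + p ≤ k - 1 by omega), Finset.prod_insert (by simp)]
  rw [show a + p - p = a by ring, show a + 1 + p = a + p + 1 by ring]
  ring

lemma F_zero_right (p q : ℕ) {g : Pat E A B → ℝ} (hg : ∀ x, 0 ≤ g x) {k a b : ℤ}
    (hb : k + q ≤ b) {ψ : Pat E A B} (h : M g (Icc (b + 1 - q - p) b) ψ = 0) :
    F p q g k a b ψ = 0 := by
  have h1 : M g (Icc (b - q - p) (b - q + q)) ψ = 0 := by
    refine M_zero hg (fun x hx => ?_) h
    simp only [Finset.mem_Icc] at hx ⊢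
    omega
  unfold F
  rcases hb.eq_or_lt with hb | hb
  · rw [show b - q = k by omega] at h1
    rw [h1]; simp
  · rw [Finset.prod_eq_zero (i := b - q) (s := Icc (k + 1) (b - q))]
    · simp
    · simp; omega
    · rw [h1]; simp

lemma F_zero_left (p q : ℕ) {g : Pat E A B → ℝ} (hg : ∀ x, 0 ≤ g x) {k a b : ℤ}
    (ha : a ≤ k - p) {ψ : Pat E A B} (h : M g (Icc a (a - 1 + p + q)) ψ = 0) :
    F p q g k a b ψ = 0 := by
  have h1 : M g (Icc (a + p - p) (a + p + q)) ψ = 0 := by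
    refine M_zero hg (fun x hx => ?_) h
    simp only [Finset.mem_Icc] at hx ⊢
    omega
  unfold F
  rcases ha.eq_or_lt with ha | ha
  · rw [show a + p = k by omega] at h1
    rw [h1]; simp
  · rw [Finset.prod_eq_zero (i := a + p) (s := Icc (a + p) (k - 1))]
    · simp
    · simp; omega
    · rw [h1]; simp

lemma sum_right (p q : ℕ) {g : Pat E A B → ℝ} (hg : ∀ x, 0 ≤ g x) {k : ℤ}
    (hA : A ≤ k - p) (n : ℕ) (hn : k + q ≤ B - n) (ψ : Pat E A B) :
    M (F p q g k A B) (Icc A (B - n)) ψ = F p q g k A (B - n) ψ := by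
  induction n generalizing ψ with
  | zero => simpa using M_full (F p q g k A B) ψ
  | succ n ih =>
    push_cast at hn ⊢
    have e : B - (n + 1 : ℤ) = (B - n) - 1 := by ring
    rw [e]
    refine M_step _ g (F p q g k A (B - n - 1)) (b := B - n)
      (C := Icc (B - n - q - p) (B - n - 1)) ?_ ?_ ?_ ?_ ?_ ?_ ψ
    · simp; omega
    · simp
    · intro x hx
      simp only [Finset.mem_Icc] at hx ⊢
      omega
    · intro ψ
      rw [← insR (by omega), ih (by omega), F_right p q g (by omega)]
    · intro ψ ψ' h
      exact F_congr p q g hA (by omega) h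
    · intro ψ h
      apply F_zero_right p q hg (by omega)
      rw [← h]; congr 2; ring

lemma sum_left (p q : ℕ) {g : Pat E A B → ℝ} (hg : ∀ x, 0 ≤ g x) {k : ℤ}
    (hB : k + q ≤ B) (n : ℕ) (hn : A + n ≤ k - p) (ψ : Pat E A B) :
    M (F p q g k A B) (Icc (A + n) (k + q)) ψ = F p q g k (A + n) (k + q) ψ := by
  induction n generalizing ψ with
  | zero =>
    have := sum_right p q hg (k := k) (by simpa using hn) (B - (k + q)).toNat (by omega) ψ
    rw [show B - ((B - (k + q)).toNat : ℤ) = k + q by omega] at this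
    simpa using this
  | succ n ih =>
    push_cast at hn ⊢
    rw [← add_assoc]
    refine M_step _ g (F p q g k (A + n + 1) (k + q)) (b := A + n)
      (C := Icc (A + n + 1) (A + n + p + q)) ?_ ?_ ?_ ?_ ?_ ?_ ψ
    · simp; omega
    · simp
    · intro x hx
      simp only [Finset.mem_Icc] at hx ⊢
      omega
    · intro ψ
      rw [← insL (by omega), ih (by omega), F_left p q g (by omega)]
    · intro ψ ψ' h
      exact F_congr p q g (by omega) le_rfl h
    · intro ψ h
      apply F_zero_left p q hg (by omega)
      rw [← h]; congr 2; ring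

lemma sum_both (p q : ℕ) {g : Pat E A B → ℝ} (hg : ∀ x, 0 ≤ g x) {k : ℤ}
    (hA : A ≤ k - p) (hB : k + q ≤ B) (ψ : Pat E A B) :
    M (F p q g k A B) (Icc (k - p) (k + q)) ψ = M g (Icc (k - p) (k + q)) ψ := by
  have := sum_left p q hg hB (k - p - A).toNat (by omega) ψ
  rw [show A + ((k - p - A).toNat : ℤ) = k - p by omega] at this
  rw [this]
  simp [F]

lemma F_succ (p q : ℕ) (g : Pat E A B → ℝ) {k : ℤ} (hA : A ≤ k - p) (hB : k + 1 + q ≤ B)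
    (ψ : Pat E A B) : F p q g k A B ψ = F p q g (k + 1) A B ψ := by
  unfold F
  rw [insL (show k + 1 ≤ B - q by omega), Finset.prod_insert (by simp)]
  rw [show k + 1 - 1 = k by ring, insR (show A + p ≤ k by omega), Finset.prod_insert (by simp)]
  rw [show k + 1 + q - 1 = k + (q : ℤ) by ring, show k + 1 - (p : ℤ) = k - p + 1 by ring]
  ring

lemma F_indep (p q : ℕ) (g : Pat E A B → ℝ) (n : ℕ) {k : ℤ} (hA : A ≤ k - p)
    (hB : k + n + q ≤ B) (ψ : Pat E A B) : F p q g k A B ψ = F p q g (k + n) A B ψ := by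
  induction n with
  | zero => simp
  | succ n ih =>
    push_cast at hB ⊢
    rw [ih (by omega), F_succ p q g (by omega) (by omega), add_assoc]

lemma F_indep2 (p q : ℕ) (g : Pat E A B → ℝ) {k l : ℤ} (hA : A ≤ k - p) (hB : k + q ≤ B)
    (hA' : A ≤ l - p) (hB' : l + q ≤ B) : F p q g k A B = F p q g l A B := by
  funext ψ
  rcases le_total k l with h | h
  · have := F_indep p q g (l - k).toNat hA (by omega) ψ
    rwa [show k + ((l - k).toNat : ℤ) = l by omega] at this
  · have := F_indep p q g (k - l).toNat hA' (by omega) ψ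
    rw [show l + ((k - l).toNat : ℤ) = k by omega] at this
    exact this.symm

lemma ev_win (p q : ℕ) (k : ℤ) (χ : Pat E A B) {v : ℤ} (hv : v ∈ Icc (-(p : ℤ)) (q : ℤ)) :
    ev (win p q k χ) v = ev χ (k + v) := by
  rw [ev, dif_pos hv]; rfl

variable {t u : ℤ}

lemma Pr_beta (p q : ℕ) (g : Pat E (-(p : ℤ) - t) ((q : ℤ) + u) → ℝ) (k : ℤ)
    (Q : Pat E (-(p : ℤ)) (q : ℤ) → Prop) :
    Pr (beta p q t u g k) Q = Pr g (fun χ => Q (win p q k χ)) := by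
  unfold beta Pr
  have : ∀ χ : Pat E (-(p : ℤ) - t) ((q : ℤ) + u), (if Q (win p q k χ) then g χ else 0)
      = ∑ x, (if Q x then (if win p q k χ = x then g χ else 0) else 0) := by
    intro χ
    rw [Finset.sum_eq_single (win p q k χ)]
    · simp
    · intro x _ hx
      simp [hx.symm]
    · simp
  rw [Finset.sum_congr rfl (fun χ _ => this χ), Finset.sum_comm]
  apply Finset.sum_congr rfl
  intro x _
  by_cases h : Q x
  · simp only [h, if_true]
    apply Finset.sum_congr rfl
    intro y _
    congr
  · simp only [h, if_false, Finset.sum_const_zero]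

lemma beta_eq_M (p q : ℕ) (g : Pat E (-(p : ℤ) - t) ((q : ℤ) + u) → ℝ) (k : ℤ)
    (ψ : Pat E (-(p : ℤ) - t) ((q : ℤ) + u)) :
    beta p q t u g k (win p q k ψ) = M g (Icc (k - p) (k + q)) ψ := by
  unfold beta M
  congr 1
  funext χ
  apply propext
  constructor
  · intro h j hj
    have hv : j - k ∈ Icc (-(p : ℤ)) (q : ℤ) := by
      simp only [Finset.mem_Icc] at hj ⊢; omega
    have := congrArg (fun x => ev x (j - k)) h
    simp only [ev_win p q k _ hv] at this
    simpa using this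
  · intro h
    apply ext_ev
    intro v hv
    rw [ev_win p q k _ hv, ev_win p q k _ hv]
    apply h
    simp only [Finset.mem_Icc] at hv ⊢; omega

lemma Pr_M (p q : ℕ) (g : Pat E (-(p : ℤ) - t) ((q : ℤ) + u) → ℝ) (k : ℤ)
    (ψ : Pat E (-(p : ℤ) - t) ((q : ℤ) + u)) (Q : Pat E (-(p : ℤ)) (q : ℤ) → Prop)
    (a b : ℤ) (ha : -(p : ℤ) ≤ a) (hb : b ≤ q)
    (hQ : ∀ χ, Q χ ↔ ∀ v ∈ Icc a b, ev χ v = ev ψ (k + v)) :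
    Pr (beta p q t u g k) Q = M g (Icc (k + a) (k + b)) ψ := by
  rw [Pr_beta]
  unfold M
  congr 1
  funext χ
  apply propext
  rw [hQ]
  constructor
  · intro h j hj
    simp only [Finset.mem_Icc] at hj
    have := h (j - k) (by simp only [Finset.mem_Icc]; omega)
    rw [ev_win p q k _ (by simp only [Finset.mem_Icc]; omega)] at this
    simpa using this
  · intro h v hv
    simp only [Finset.mem_Icc] at hv
    rw [ev_win p q k _ (by simp only [Finset.mem_Icc]; omega)]
    apply h
    simp only [Finset.mem_Icc]; omega

lemma alpha_beta (p q : ℕ) (g : Pat E (-(p : ℤ) - t) ((q : ℤ) + u) → ℝ) (k : ℤ) :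
    alpha p q t u (beta p q t u g) k = F p q g k (-(p : ℤ) - t) ((q : ℤ) + u) := by
  funext ψ
  unfold alpha F condPr
  rw [beta_eq_M, show -(p : ℤ) - t + p = -t by ring, show (q : ℤ) + u - q = u by ring]
  congr 1
  · congr 1
    apply Finset.prod_congr rfl
    intro l _
    congr 1
    · rw [Pr_M p q g l ψ _ (-(p : ℤ)) q le_rfl le_rfl, sub_eq_add_neg l]
      intro χ
      rw [insL (show -(p : ℤ) ≤ q by omega), Finset.forall_mem_insert]
    · rw [Pr_M p q g l ψ _ (-(p : ℤ) + 1) q (by omega) le_rfl]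
      · congr 2; ring
      · intro χ; rfl
  · apply Finset.prod_congr rfl
    intro l _
    congr 1
    · rw [Pr_M p q g l ψ _ (-(p : ℤ)) q le_rfl le_rfl, sub_eq_add_neg l]
      intro χ
      rw [insR (show -(p : ℤ) ≤ q by omega), Finset.forall_mem_insert]
    · rw [Pr_M p q g l ψ _ (-(p : ℤ)) (q - 1) le_rfl (by omega)]
      · congr 2; ring
      · intro χ; rfl

lemma win_surj (p q : ℕ) {k : ℤ} (hk : k ∈ Icc (-t) u) (φ : Pat E (-(p : ℤ)) (q : ℤ)) :
    ∃ ψ : Pat E (-(p : ℤ) - t) ((q : ℤ) + u), win p q k ψ = φ := by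
  refine ⟨fun x => ev φ (x.1 - k), ?_⟩
  apply ext_ev
  intro v hv
  rw [ev_win p q k _ hv]
  simp only [Finset.mem_Icc] at hk hv
  rw [ev, dif_pos (by simp only [Finset.mem_Icc]; omega)]
  simp

lemma alpha_congr (p q : ℕ) {m m' : ℤ → Pat E (-(p : ℤ)) (q : ℤ) → ℝ}
    (h : ∀ k ∈ Icc (-t) u, m k = m' k) {j : ℤ} (hj : j ∈ Icc (-t) u) :
    alpha p q t u m j = alpha p q t u m' j := by
  funext ψ
  unfold alpha
  rw [h j hj]
  simp only [Finset.mem_Icc] at hj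
  congr 1
  · congr 1
    apply Finset.prod_congr rfl
    intro l hl
    simp only [Finset.mem_Icc] at hl
    rw [h l (by simp only [Finset.mem_Icc]; omega)]
  · apply Finset.prod_congr rfl
    intro l hl
    simp only [Finset.mem_Icc] at hl
    rw [h l (by simp only [Finset.mem_Icc]; omega)]

end S7

/-- reconstructions from marginals are `V`-factorizable. -/
theorem stmt_7
    (E : Type) [Fintype E] [DecidableEq E] [Nonempty E]
    (p q : ℕ) (t u : ℤ) (htu : -t ≤ u)
    (gtil : Pat E (-(p : ℤ) - t) ((q : ℤ) + u) → ℝ) (hgtil : IsDensity gtil)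
    (i : ℤ) (hi : i ∈ Finset.Icc (-t) u) :
    ∀ j ∈ Finset.Icc (-t) u,
      alpha p q t u (beta p q t u (alpha p q t u (beta p q t u gtil) i)) j =
        alpha p q t u (beta p q t u gtil) i := by
  intro j hj
  have hi' := hi
  have hj' := hj
  simp only [Finset.mem_Icc] at hi' hj'
  have h1 : ∀ k ∈ Finset.Icc (-t) u,
      beta p q t u (alpha p q t u (beta p q t u gtil) i) k = beta p q t u gtil k := by
    intro k hk
    have hk' := hk
    simp only [Finset.mem_Icc] at hk'
    funext φ
    obtain ⟨ψ, rfl⟩ := S7.win_surj p q hk φ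
    rw [S7.beta_eq_M, S7.beta_eq_M, S7.alpha_beta,
      S7.F_indep2 p q gtil (k := i) (l := k) (by omega) (by omega) (by omega) (by omega)]
    exact S7.sum_both p q hgtil.1 (by omega) (by omega) ψ
  rw [S7.alpha_congr p q h1 hj, S7.alpha_beta, S7.alpha_beta]
  exact S7.F_indep2 p q gtil (by omega) (by omega) (by omega) (by omega)
end
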